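/- There exists a finite connected simple graph G with positive edge costs C, a designated source vertex s, a positive demand function d on the remaining vertices, and two spanning trees T₁ and T₂ of G, such that: (i) T₁ has strictly smaller total edge cost than T₂, and indeed T₁ has minimum total edge cost ∑_{e ∈ T} C(e) among all spanning trees T of G; and yet (ii) the quadratic distribution cost of T₂ is strictly smaller than that of T₁, i.e., ∑_{e ∈ T₂} C(e)·x_{T₂}(e)² < ∑_{e ∈ T₁} C(e)·x_{T₁}(e)², where x_T denotes the unique flow on the spanning tree T that delivers d(v) units to every vertex v ≠ s from the source s. Hence a minimum spanning tree need not be an optimal radial configuration for the quadratic distribution cost. -/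

import Mathlib

open scoped Classical

/-- Total edge cost `∑_{e ∈ T} C e` of a subgraph `T`. -/
noncomputable def edgeCostSum {n : ℕ} (C : Sym2 (Fin n) → ℝ)
    (T : SimpleGraph (Fin n)) : ℝ :=
  ∑ e ∈ T.edgeFinset, C e

/-- The unique flow on the spanning tree `T` delivering demand `d v` to each
vertex `v ≠ s` from the source `s`: on an edge `e`, it equals the total demand of
the vertices on the side of `e` away from `s`, i.e. of the vertices not reachable
from `s` once `e` is deleted. -/
noncomputable def treeFlow {n : ℕ} (d : Fin n → ℝ) (s : Fin n)
    (T : SimpleGraph (Fin n)) (e : Sym2 (Fin n)) : ℝ :=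
  ∑ v ∈ Finset.univ.filter (fun v => ¬ (T.deleteEdges {e}).Reachable s v), d v

/-- Quadratic distribution cost `∑_{e ∈ T} C e · x_T(e)²` of a spanning tree `T`. -/
noncomputable def quadCost {n : ℕ} (C : Sym2 (Fin n) → ℝ) (d : Fin n → ℝ)
    (s : Fin n) (T : SimpleGraph (Fin n)) : ℝ :=
  ∑ e ∈ T.edgeFinset, C e * (treeFlow d s T e) ^ 2

def exT₁ : SimpleGraph (Fin 3) := SimpleGraph.fromEdgeSet {s(0,1), s(1,2)}
def exT₂ : SimpleGraph (Fin 3) := SimpleGraph.fromEdgeSet {s(0,1), s(0,2)}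
noncomputable def exC (e : Sym2 (Fin 3)) : ℝ := if e = s(1,2) then 1 else 2

lemma exT₁_edges : exT₁.edgeFinset = {s(0,1), s(1,2)} := by
  ext e
  rw [SimpleGraph.mem_edgeFinset, exT₁, SimpleGraph.edgeSet_fromEdgeSet]
  simp only [Set.mem_sdiff, Set.mem_insert_iff, Set.mem_singleton_iff, Finset.mem_insert,
    Finset.mem_singleton]
  constructor
  · exact fun h => h.1
  · rintro (rfl | rfl) <;> simp

lemma exT₂_edges : exT₂.edgeFinset = {s(0,1), s(0,2)} := by
  ext e
  rw [SimpleGraph.mem_edgeFinset, exT₂, SimpleGraph.edgeSet_fromEdgeSet]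
  simp only [Set.mem_sdiff, Set.mem_insert_iff, Set.mem_singleton_iff, Finset.mem_insert,
    Finset.mem_singleton]
  constructor
  · exact fun h => h.1
  · rintro (rfl | rfl) <;> simp

lemma exT₁_tree : exT₁.IsTree := by
  have h01 : exT₁.Reachable 0 1 := SimpleGraph.Adj.reachable (by simp [exT₁])
  have h12 : exT₁.Reachable 1 2 := SimpleGraph.Adj.reachable (by simp [exT₁])
  rw [SimpleGraph.isTree_iff_connected_and_card]
  constructor
  · rw [SimpleGraph.connected_iff_exists_forall_reachable]
    refine ⟨0, fun w => ?_⟩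
    fin_cases w
    · exact SimpleGraph.Reachable.refl _
    · exact h01
    · exact h01.trans h12
  · rw [Nat.card_eq_fintype_card, ← SimpleGraph.edgeFinset_card, exT₁_edges]
    rw [Finset.card_pair (by decide)]
    simp

lemma exT₂_tree : exT₂.IsTree := by
  have h01 : exT₂.Reachable 0 1 := SimpleGraph.Adj.reachable (by simp [exT₂])
  have h02 : exT₂.Reachable 0 2 := SimpleGraph.Adj.reachable (by simp [exT₂])
  rw [SimpleGraph.isTree_iff_connected_and_card]
  constructor
  · rw [SimpleGraph.connected_iff_exists_forall_reachable]
    refine ⟨0, fun w => ?_⟩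
    fin_cases w
    · exact SimpleGraph.Reachable.refl _
    · exact h01
    · exact h02
  · rw [Nat.card_eq_fintype_card, ← SimpleGraph.edgeFinset_card, exT₂_edges]
    rw [Finset.card_pair (by decide)]
    simp

lemma exC_pos (e : Sym2 (Fin 3)) : 0 < exC e := by
  unfold exC; split_ifs <;> norm_num

lemma exT₁_cost : edgeCostSum exC exT₁ = 3 := by
  unfold edgeCostSum
  rw [exT₁_edges, Finset.sum_pair (by decide)]
  have h : (s(0,1) : Sym2 (Fin 3)) ≠ s(1,2) := by decide
  simp only [exC, h, if_true, if_false]; norm_num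

lemma exT₂_cost : edgeCostSum exC exT₂ = 4 := by
  unfold edgeCostSum
  rw [exT₂_edges, Finset.sum_pair (by decide)]
  have h : (s(0,1) : Sym2 (Fin 3)) ≠ s(1,2) := by decide
  have h' : (s(0,2) : Sym2 (Fin 3)) ≠ s(1,2) := by decide
  simp only [exC, h, h', if_false]; norm_num

lemma ex_min (T : SimpleGraph (Fin 3)) (hT : T.IsTree) : 3 ≤ edgeCostSum exC T := by
  have hc : T.edgeFinset.card = 2 := by
    have := hT.card_edgeFinset
    simp at this
    simpa using this
  obtain ⟨a, b, hab, h⟩ := Finset.card_eq_two.1 hc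
  unfold edgeCostSum
  rw [h, Finset.sum_pair hab]
  unfold exC
  split_ifs with h1 h2 h2
  · exact absurd (h1.trans h2.symm) hab
  all_goals norm_num

lemma ex_flow₁ : treeFlow (fun _ => 1) 0 exT₁ s(0,1) = 2 := by
  have iso : ∀ v, (exT₁.deleteEdges {s(0,1)}).Reachable 0 v → v = 0 := by
    rintro v ⟨p⟩
    cases p with
    | nil => rfl
    | cons h q =>
      exfalso
      rename_i w
      fin_cases w <;> simp [exT₁] at h
  have : Finset.univ.filter (fun v => ¬ (exT₁.deleteEdges {s(0,1)}).Reachable 0 v) = {1, 2} := by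
    ext v
    simp only [Finset.mem_filter, Finset.mem_univ, true_and]
    constructor
    · intro h
      fin_cases v
      · exact absurd (SimpleGraph.Reachable.refl _) h
      · simp
      · simp
    · intro h h'
      have := iso v h'
      subst this
      revert h; decide
  unfold treeFlow
  rw [this, Finset.sum_pair (by decide)]; norm_num

lemma ex_flow₂ (e : Sym2 (Fin 3)) (a b : Fin 3) (hab : ∀ v, v = 0 ∨ v = a ∨ v = b)
    (h : (exT₂.deleteEdges {e}).Adj 0 a) :
    0 ≤ treeFlow (fun _ => 1) 0 exT₂ e ∧ treeFlow (fun _ => 1) 0 exT₂ e ≤ 1 := by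
  unfold treeFlow
  refine ⟨Finset.sum_nonneg (fun _ _ => zero_le_one), ?_⟩
  have : Finset.univ.filter (fun v => ¬ (exT₂.deleteEdges {e}).Reachable 0 v) ⊆ {b} := by
    intro v hv
    simp only [Finset.mem_filter, Finset.mem_univ, true_and] at hv
    rcases hab v with rfl | rfl | rfl
    · exact absurd (SimpleGraph.Reachable.refl _) hv
    · exact absurd h.reachable hv
    · simp
  refine (Finset.sum_le_sum_of_subset_of_nonneg this (fun _ _ _ => zero_le_one)).trans ?_
  simp

lemma ex_quad₁ : 8 ≤ quadCost exC (fun _ => 1) 0 exT₁ := by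
  unfold quadCost
  rw [exT₁_edges, Finset.sum_pair (by decide), ex_flow₁]
  have h : (s(0,1) : Sym2 (Fin 3)) ≠ s(1,2) := by decide
  have h1 : exC s(0,1) = 2 := by simp only [exC, h, if_false]
  have h2 := mul_nonneg (exC_pos s(1,2)).le (sq_nonneg (treeFlow (fun _ => 1) 0 exT₁ s(1,2)))
  rw [h1]; linarith

lemma ex_quad₂ : quadCost exC (fun _ => 1) 0 exT₂ ≤ 4 := by
  unfold quadCost
  rw [exT₂_edges, Finset.sum_pair (by decide)]
  have h : (s(0,1) : Sym2 (Fin 3)) ≠ s(1,2) := by decide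
  have h' : (s(0,2) : Sym2 (Fin 3)) ≠ s(1,2) := by decide
  have h1 : exC s(0,1) = 2 := by simp only [exC, h, if_false]
  have h2 : exC s(0,2) = 2 := by simp only [exC, h', if_false]
  obtain ⟨a0, a1⟩ := ex_flow₂ s(0,1) 2 1 (by decide) (by simp [exT₂])
  obtain ⟨b0, b1⟩ := ex_flow₂ s(0,2) 1 2 (by decide) (by simp [exT₂])
  rw [h1, h2]; nlinarith

/-- There is a finite connected graph `G` with positive edge costs
`C`, a source `s`, positive demands `d` on the other vertices, and spanning trees
`T₁, T₂` of `G` such that `T₁` has strictly smaller (indeed minimum) total edge cost,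
yet the quadratic distribution cost of `T₂` is strictly smaller than that of `T₁`:
a minimum spanning tree need not be an optimal radial configuration. -/
theorem mst_not_optimal_for_quadratic_cost :
    ∃ (n : ℕ) (G : SimpleGraph (Fin n)) (C : Sym2 (Fin n) → ℝ) (s : Fin n)
      (d : Fin n → ℝ) (T₁ T₂ : SimpleGraph (Fin n)),
      G.Connected ∧
      (∀ e ∈ G.edgeSet, 0 < C e) ∧
      (∀ v : Fin n, v ≠ s → 0 < d v) ∧
      T₁ ≤ G ∧ T₁.IsTree ∧ T₂ ≤ G ∧ T₂.IsTree ∧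
      edgeCostSum C T₁ < edgeCostSum C T₂ ∧
      (∀ T : SimpleGraph (Fin n), T ≤ G → T.IsTree →
        edgeCostSum C T₁ ≤ edgeCostSum C T) ∧
      quadCost C d s T₂ < quadCost C d s T₁ := by
  refine ⟨3, ⊤, exC, 0, fun _ => 1, exT₁, exT₂, SimpleGraph.connected_top,
    fun e _ => exC_pos e, fun _ _ => one_pos, le_top, exT₁_tree, le_top, exT₂_tree, ?_, ?_, ?_⟩
  · rw [exT₁_cost, exT₂_cost]; norm_num
  · intro T _ hT
    rw [exT₁_cost]; exact ex_min T hT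
  · have := ex_quad₁
    have := ex_quad₂
    linarith
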